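/- arXiv:2305.05366 — 2 statements merged into one kernel-verified Lean document; each statement's English description precedes it below -/
import Mathlib

section
/- Let N ≥ 1 and let H : ℝ → M_N(ℂ) be a differentiable matrix-valued function such that for every t, H(t) is Hermitian and invertible. Let A : ℝ → M_N(ℂ) be differentiable and satisfy the ODE A'(t) = −(1/2) A(t) H'(t) H(t)⁻¹ for all t, together with the initial condition A(0) H(0) A(0)* = Id (where B* denotes the conjugate transpose of B). Then A(t) H(t) A(t)* = Id for all t ∈ ℝ. -/
open Matrix

/-!
The proof shows that `A H A*` has zero derivative. Multiplying the ODE on the right by `H` gives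
`A' H = -½ A H'`; since `H` and `H'` are self-adjoint, taking adjoints gives `H A'* = -½ H' A*`.
Hence `A' H A*` and `A H A'*` each cancel half of the remaining term `A H' A*` of the derivative.
-/

open scoped Topology

section NormedSpace

variable {𝕜 E : Type*} [NontriviallyNormedField 𝕜] [StarRing 𝕜] [TrivialStar 𝕜]
  [NormedAddCommGroup E] [NormedSpace 𝕜 E] [StarAddMonoid E] [StarModule 𝕜 E] [ContinuousStar E]

theorem isSelfAdjoint_of_hasDerivAt {f : 𝕜 → E} {f' : E} {x : 𝕜} (hf : HasDerivAt f f' x)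
    (hsa : ∀ᶠ y in 𝓝 x, IsSelfAdjoint (f y)) : IsSelfAdjoint f' :=
  have hstar : HasDerivAt f (star f') x :=
    hf.star.congr_of_eventuallyEq (hsa.mono fun _ hy => hy.star_eq.symm)
  hstar.unique hf

end NormedSpace

section NormedStarAlgebra

variable {R : Type*} [NormedRing R] [NormedAlgebra ℝ R] [StarRing R] [StarModule ℝ R]
  [ContinuousStar R]

theorem hasDerivAt_mul_mul_star_zero {H A : ℝ → R} {H' A' : R} {t : ℝ}
    (hH : HasDerivAt H H' t) (hA : HasDerivAt A A' t) (hsa : ∀ᶠ s in 𝓝 t, IsSelfAdjoint (H s))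
    (hODE : A' * H t = -(1 / 2 : ℝ) • (A t * H')) :
    HasDerivAt (fun s => A s * H s * star (A s)) 0 t := by
  have hODE_star : H t * star A' = -(1 / 2 : ℝ) • (H' * star (A t)) := by
    simpa only [star_mul, star_smul, hsa.self_of_nhds.star_eq,
      (isSelfAdjoint_of_hasDerivAt hH hsa).star_eq, star_trivial] using congrArg star hODE
  have hcancel : (A' * H t + A t * H') * star (A t) + A t * H t * star A' = 0 := by
    rw [mul_assoc (A t), hODE_star, add_mul, hODE, smul_mul_assoc, mul_smul_comm, mul_assoc]
    module
  rw [← hcancel]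
  exact (hA.fun_mul hH).fun_mul hA.star

/-- Wherever `H t` is invertible, `hODE` is the equation `A' t = -½ A t * H' t * (H t)⁻¹`. -/
theorem stmt_3_general {H H' A A' : ℝ → R} (hsa : ∀ t, IsSelfAdjoint (H t))
    (hH : ∀ t, HasDerivAt H (H' t) t) (hA : ∀ t, HasDerivAt A (A' t) t)
    (hODE : ∀ t, A' t * H t = -(1 / 2 : ℝ) • (A t * H' t)) (s t : ℝ) :
    A s * H s * star (A s) = A t * H t * star (A t) :=
  have hderiv (u : ℝ) : HasDerivAt (fun v => A v * H v * star (A v)) 0 u :=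
    hasDerivAt_mul_mul_star_zero (hH u) (hA u) (.of_forall hsa) (hODE u)
  is_const_of_deriv_eq_zero (fun u => (hderiv u).differentiableAt) (fun u => (hderiv u).deriv) s t

end NormedStarAlgebra

section Matrix

variable {m n 𝕜 E : Type*} [Finite m] [Finite n] [NontriviallyNormedField 𝕜]
  [NormedAddCommGroup E] [NormedSpace 𝕜 E]

theorem hasDerivAt_matrix {F : 𝕜 → Matrix m n E} {F' : Matrix m n E} {x : 𝕜} :
    HasDerivAt F F' x ↔ ∀ i j, HasDerivAt (fun y => F y i j) (F' i j) x :=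
  have := Fintype.ofFinite m
  have := Fintype.ofFinite n
  hasDerivAt_pi.trans (forall_congr' fun _ => hasDerivAt_pi)

end Matrix

/-- If `H : ℝ → M_N(ℂ)` is differentiable with `H t` Hermitian and invertible
for all `t`, and `A : ℝ → M_N(ℂ)` is differentiable satisfying the ODE
`A' t = -(1/2) A t * H' t * (H t)⁻¹` with `A 0 * H 0 * (A 0)ᴴ = 1`, then
`A t * H t * (A t)ᴴ = 1` for all `t`. -/
theorem stmt_3 (N : ℕ) (hN : 1 ≤ N)
    (H H' A A' : ℝ → Matrix (Fin N) (Fin N) ℂ)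
    (hHherm : ∀ t, (H t).IsHermitian)
    (hHinv : ∀ t, IsUnit (H t))
    (hH : ∀ t i j, HasDerivAt (fun s => H s i j) (H' t i j) t)
    (hA : ∀ t i j, HasDerivAt (fun s => A s i j) (A' t i j) t)
    (hODE : ∀ t, A' t = (-(1/2) : ℂ) • (A t * H' t * (H t)⁻¹))
    (hinit : A 0 * H 0 * (A 0)ᴴ = 1) :
    ∀ t, A t * H t * (A t)ᴴ = 1 := by
  intro t
  -- The topology of the Frobenius norm unfolds to the entrywise one used in `hasDerivAt_matrix`.
  let := Matrix.frobeniusNormedRing (m := Fin N) (α := ℂ)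
  let := Matrix.frobeniusNormedAlgebra (R := ℝ) (m := Fin N) (α := ℂ)
  have hODE_mul (u : ℝ) : A' u * H u = -(1 / 2 : ℝ) • (A u * H' u) := by
    rw [hODE, smul_mul_assoc,
      nonsing_inv_mul_cancel_right _ _ ((isUnit_iff_isUnit_det _).1 (hHinv u))]
    ext i j
    simp
  exact (stmt_3_general hHherm (fun u => hasDerivAt_matrix.2 (hH u))
    (fun u => hasDerivAt_matrix.2 (hA u)) hODE_mul t 0).trans hinit
end

section
/- Let Δ ⊂ ℝⁿ be a compact measurable set, π : ℝⁿ → ℝ a continuous function with π(y) ≥ 0 for y ∈ Δ and ∫_Δ π(y) dy > 0, and κ ∈ ℝⁿ a fixed vector; let F(Λ) = log ∫_Δ e^{⟨Λ, κ − y⟩} π(y) dy. Let C ⊆ ℝⁿ be a convex set and Λ₀ ∈ C. Define I(Λ) = ∫_Δ ⟨Λ, κ − y⟩ e^{⟨Λ₀, κ − y⟩} π(y) dy. If I(Λ) ≥ 0 for every Λ ∈ C, and I(Λ₀) = 0, then F(Λ₀) ≤ F(Λ) for every Λ ∈ C, i.e. F attains its minimum over C at Λ₀. -/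
open MeasureTheory

/-!
The exponential lies above its tangents: `e^a ≥ e^b + (a - b) e^b`. With `a = ⟨Λ, κ - y⟩` and
`b = ⟨Λ₀, κ - y⟩`, integrating against `π` over `Δ` gives
`∫ e^{⟨Λ, κ - y⟩} π ≥ ∫ e^{⟨Λ₀, κ - y⟩} π + I(Λ) - I(Λ₀)`. The integral at `Λ₀` is positive, so
taking logarithms preserves the inequality.
-/

lemma exp_add_sub_mul_exp_le_exp (a b : ℝ) :
    Real.exp b + (a - b) * Real.exp b ≤ Real.exp a :=
  calc Real.exp b + (a - b) * Real.exp b = (a - b + 1) * Real.exp b := by ring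
    _ ≤ Real.exp (a - b) * Real.exp b := by gcongr; exact Real.add_one_le_exp _
    _ = Real.exp a := by rw [← Real.exp_add, sub_add_cancel]

section Measure

variable {X : Type*} [MeasurableSpace X] {μ : Measure X} {f g w : X → ℝ}

lemma integral_mul_pos_of_ae_pos {u : X → ℝ} (hu : ∀ᵐ x ∂μ, 0 < u x) (hw : 0 ≤ᵐ[μ] w)
    (hwpos : 0 < ∫ x, w x ∂μ) (huw : Integrable (fun x ↦ u x * w x) μ) :
    0 < ∫ x, u x * w x ∂μ := by
  have huw_nonneg : 0 ≤ᵐ[μ] fun x ↦ u x * w x := by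
    filter_upwards [hu, hw] with x hux hwx using mul_nonneg hux.le hwx
  refine (integral_nonneg_of_ae huw_nonneg).lt_of_ne' fun h ↦ hwpos.ne' ?_
  refine integral_eq_zero_of_ae ?_
  filter_upwards [hu, (integral_eq_zero_iff_of_nonneg_ae huw_nonneg huw).mp h] with x hux hx
  exact (mul_eq_zero.mp hx).resolve_left hux.ne'

lemma integral_exp_mul_add_integral_sub_mul_le (hw : 0 ≤ᵐ[μ] w)
    (hf : Integrable (fun x ↦ Real.exp (f x) * w x) μ)
    (hg : Integrable (fun x ↦ Real.exp (g x) * w x) μ)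
    (hgf : Integrable (fun x ↦ (g x - f x) * Real.exp (f x) * w x) μ) :
    ∫ x, Real.exp (f x) * w x ∂μ + ∫ x, (g x - f x) * Real.exp (f x) * w x ∂μ ≤
      ∫ x, Real.exp (g x) * w x ∂μ := by
  rw [← integral_add hf hgf]
  refine integral_mono_ae (hf.add hgf) hg ?_
  filter_upwards [hw] with x hx
  rw [← add_mul]
  exact mul_le_mul_of_nonneg_right (exp_add_sub_mul_exp_le_exp _ _) hx

lemma log_integral_exp_mul_le (hw : 0 ≤ᵐ[μ] w) (hwpos : 0 < ∫ x, w x ∂μ)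
    (hf : Integrable (fun x ↦ Real.exp (f x) * w x) μ)
    (hg : Integrable (fun x ↦ Real.exp (g x) * w x) μ)
    (hgf : Integrable (fun x ↦ (g x - f x) * Real.exp (f x) * w x) μ)
    (hvar : 0 ≤ ∫ x, (g x - f x) * Real.exp (f x) * w x ∂μ) :
    Real.log (∫ x, Real.exp (f x) * w x ∂μ) ≤ Real.log (∫ x, Real.exp (g x) * w x ∂μ) :=
  Real.log_le_log
    (integral_mul_pos_of_ae_pos (.of_forall fun _ ↦ Real.exp_pos _) hw hwpos hf)
    ((le_add_of_nonneg_right hvar).trans (integral_exp_mul_add_integral_sub_mul_le hw hf hg hgf))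

end Measure

theorem stmt_13_general {X ι : Type*} [TopologicalSpace X] [T2Space X] [MeasurableSpace X]
    [OpensMeasurableSpace X] {μ : Measure X} {Δ : Set X} (hΔ : IsCompact Δ) {π : X → ℝ}
    (hπ : 0 ≤ᵐ[μ.restrict Δ] π) (hπpos : 0 < ∫ y in Δ, π y ∂μ) {φ : ι → X → ℝ} {C : Set ι}
    {Λ₀ : ι} (hφ₀ : ContinuousOn (φ Λ₀) Δ) (hφ : ∀ Λ ∈ C, ContinuousOn (φ Λ) Δ)
    (hvar : ∀ Λ ∈ C, ∫ y in Δ, φ Λ₀ y * Real.exp (φ Λ₀ y) * π y ∂μ ≤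
      ∫ y in Δ, φ Λ y * Real.exp (φ Λ₀ y) * π y ∂μ) :
    IsMinOn (fun Λ ↦ Real.log (∫ y in Δ, Real.exp (φ Λ y) * π y ∂μ)) C Λ₀ := by
  intro Λ hΛ
  have hπint : IntegrableOn π Δ μ := .of_integral_ne_zero hπpos.ne'
  have hint {u : X → ℝ} (hu : ContinuousOn u Δ) : IntegrableOn (fun y ↦ u y * π y) Δ μ :=
    hπint.continuousOn_mul hu hΔ
  have hexp₀ := hφ₀.rexp
  have hφΛ := hφ Λ hΛ
  have hvar_sub : 0 ≤ ∫ y in Δ, (φ Λ y - φ Λ₀ y) * Real.exp (φ Λ₀ y) * π y ∂μ := by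
    simp only [sub_mul]
    exact (sub_nonneg.mpr (hvar Λ hΛ)).trans_eq
      (integral_sub (hint (hφΛ.mul hexp₀)) (hint (hφ₀.mul hexp₀))).symm
  exact log_integral_exp_mul_le hπ hπpos (hint hexp₀) (hint hφΛ.rexp)
    (hint ((hφΛ.sub hφ₀).mul hexp₀)) hvar_sub

/-- In the setting of Statement 10, let `C ⊆ ℝⁿ` be convex, `Λ₀ ∈ C`, and
`I(Λ) = ∫_Δ ⟨Λ, κ - y⟩ e^{⟨Λ₀, κ - y⟩} π dy`. If `I(Λ) ≥ 0` for all `Λ ∈ C` and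
`I(Λ₀) = 0`, then `F(Λ) = log ∫_Δ e^{⟨Λ, κ - y⟩} π dy` attains its minimum over `C`
at `Λ₀`. -/
theorem stmt_13 (n : ℕ) (Δ : Set (Fin n → ℝ)) (hΔc : IsCompact Δ) (hΔm : MeasurableSet Δ)
    (π : (Fin n → ℝ) → ℝ) (hπcont : Continuous π) (hπnn : ∀ y ∈ Δ, 0 ≤ π y)
    (hπpos : 0 < ∫ y in Δ, π y) (κ : Fin n → ℝ)
    (C : Set (Fin n → ℝ)) (hC : Convex ℝ C) (Λ₀ : Fin n → ℝ) (hΛ₀ : Λ₀ ∈ C)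
    (hI : ∀ Λ ∈ C,
      0 ≤ ∫ y in Δ, (∑ i, Λ i * (κ i - y i)) * Real.exp (∑ i, Λ₀ i * (κ i - y i)) * π y)
    (hI0 : (∫ y in Δ,
      (∑ i, Λ₀ i * (κ i - y i)) * Real.exp (∑ i, Λ₀ i * (κ i - y i)) * π y) = 0) :
    ∀ Λ ∈ C,
      Real.log (∫ y in Δ, Real.exp (∑ i, Λ₀ i * (κ i - y i)) * π y) ≤
        Real.log (∫ y in Δ, Real.exp (∑ i, Λ i * (κ i - y i)) * π y) :=
  isMinOn_iff.mp <| stmt_13_general (φ := fun Λ y ↦ ∑ i, Λ i * (κ i - y i)) hΔc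
    (ae_restrict_of_forall_mem hΔm hπnn) hπpos (by fun_prop) (fun _ _ ↦ by fun_prop)
    fun Λ hΛ ↦ hI0.trans_le (hI Λ hΛ)
end
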